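/- arXiv:1807.00379 — 2 statements merged into one kernel-verified Lean document; each statement's English description precedes it below -/
import Mathlib

section
/- Let G be a graph on vertices {1,…,t} with edge set E. Then the dual cone of SDD^G satisfies (SDD^G)* = {Q ∈ S^t : ι_{ij}*(Q) ⪰ 0 for all {i,j} ∈ E}, where ι_{ij}*(Q) is the 2×2 submatrix of Q formed by rows and columns i and j. -/
open Matrix Set

noncomputable section

/-- The embedding `ι_{ij} : S² → Sⁿ` placing a 2×2 symmetric matrix into
rows/columns `i, j` with zeros elsewhere. -/
def iota {n : ℕ} (i j : Fin n) (S : Matrix (Fin 2) (Fin 2) ℝ) :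
    Matrix (Fin n) (Fin n) ℝ :=
  Matrix.of fun r s =>
    (if r = i ∧ s = i then S 0 0 else 0) +
    (if r = i ∧ s = j then S 0 1 else 0) +
    (if r = j ∧ s = i then S 1 0 else 0) +
    (if r = j ∧ s = j then S 1 1 else 0)

/-- The cone `SDDⁿ = Σ_{i<j} ι_{ij}(S²₊)` of scaled diagonally dominant matrices. -/
def SDD (n : ℕ) : Set (Matrix (Fin n) (Fin n) ℝ) :=
  {X | ∃ S : Fin n → Fin n → Matrix (Fin 2) (Fin 2) ℝ,
    (∀ i j : Fin n, (S i j).PosSemidef) ∧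
    X = ∑ i : Fin n, ∑ j : Fin n, if i < j then iota i j (S i j) else 0}

/-- `Nⁿ`: symmetric entrywise nonnegative matrices. -/
def NonnegMat (n : ℕ) : Set (Matrix (Fin n) (Fin n) ℝ) :=
  {X | X.IsSymm ∧ ∀ i j, 0 ≤ X i j}

/-- Dual cone within the space of symmetric matrices, w.r.t. the trace inner product. -/
def dualCone {n : ℕ} (C : Set (Matrix (Fin n) (Fin n) ℝ)) :
    Set (Matrix (Fin n) (Fin n) ℝ) :=
  {Y | Y.IsSymm ∧ ∀ X ∈ C, 0 ≤ (X * Y).trace}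

open scoped Classical in
/-- `SDD^G = Σ_{{i,j}∈E} ι_{ij}(S²₊)` (equal to `{0}` if `E = ∅`). -/
def SDDG {t : ℕ} (G : SimpleGraph (Fin t)) : Set (Matrix (Fin t) (Fin t) ℝ) :=
  {X | ∃ S : Fin t → Fin t → Matrix (Fin 2) (Fin 2) ℝ,
    (∀ i j : Fin t, (S i j).PosSemidef) ∧
    X = ∑ i : Fin t, ∑ j : Fin t, if i < j ∧ G.Adj i j then iota i j (S i j) else 0}

/-- `SDD^G₊ = SDD^G ∩ Nᵗ`. -/
def SDDGplus {t : ℕ} (G : SimpleGraph (Fin t)) : Set (Matrix (Fin t) (Fin t) ℝ) :=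
  SDDG G ∩ NonnegMat t

/-- `SDD^G₊(U) = Uᵀ (SDD^G₊) U`. -/
def SDDGplusU {t n : ℕ} (G : SimpleGraph (Fin t)) (U : Matrix (Fin t) (Fin n) ℝ) :
    Set (Matrix (Fin n) (Fin n) ℝ) :=
  {X | ∃ Y ∈ SDDGplus G, X = Uᵀ * Y * U}

/-- `seg(G,U) = ∪_{{i,j}∈E} [uᵢ, uⱼ]`. -/
def seg {t n : ℕ} (G : SimpleGraph (Fin t)) (U : Matrix (Fin t) (Fin n) ℝ) :
    Set (Fin n → ℝ) :=
  {v | ∃ i j : Fin t, G.Adj i j ∧ v ∈ segment ℝ (U i) (U j)}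

/-! Trace duality: `ι_{ij}` is adjoint to restriction to the `2 × 2` block in rows and columns
`i, j`, and a matrix is in the dual of a sum of cones as soon as it is nonnegative on each summand.
So `Q` lies in `(SDD^G)*` exactly when each block of `Q` along an edge pairs nonnegatively with
all of `S²₊`, and `S²₊` is self-dual. -/

section TraceDuality

variable {m : Type*} [Fintype m]

theorem trace_vecMulVec_mul {R : Type*} [CommSemiring R] (x y : m → R) (A : Matrix m m R) :
    (vecMulVec x y * A).trace = y ⬝ᵥ (A *ᵥ x) := by
  rw [trace_mul_comm, mul_vecMulVec, trace_vecMulVec, dotProduct_comm]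

open scoped ComplexOrder

variable {𝕜 : Type*} [RCLike 𝕜] {A B : Matrix m m 𝕜}

theorem trace_mul_nonneg_of_posSemidef (hA : A.PosSemidef) (hB : B.PosSemidef) :
    0 ≤ (A * B).trace := by
  obtain ⟨k, v, rfl⟩ := posSemidef_iff_eq_sum_vecMulVec.mp hA
  simp only [Finset.sum_mul, trace_sum, trace_vecMulVec_mul]
  exact Finset.sum_nonneg fun l _ => hB.dotProduct_mulVec_nonneg (v l)

theorem posSemidef_iff_forall_trace_mul_nonneg (hB : B.IsHermitian) :
    B.PosSemidef ↔ ∀ A : Matrix m m 𝕜, A.PosSemidef → 0 ≤ (A * B).trace := by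
  refine ⟨fun h A hA => trace_mul_nonneg_of_posSemidef hA h,
    fun h => .of_dotProduct_mulVec_nonneg hB fun x => ?_⟩
  rw [← trace_vecMulVec_mul]
  exact h _ (posSemidef_vecMulVec_self_star x)

end TraceDuality

section Iota

variable {n : ℕ} (i j : Fin n) (S : Matrix (Fin 2) (Fin 2) ℝ)

theorem iota_eq_add_single :
    iota i j S =
      single i i (S 0 0) + single i j (S 0 1) + single j i (S 1 0) + single j j (S 1 1) := by
  ext r s
  simp only [iota, of_apply, Matrix.add_apply, single_apply, eq_comm]

@[simp]
theorem iota_zero : iota i j 0 = 0 := by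
  simp [iota_eq_add_single]

theorem iota_swap :
    iota j i S = iota i j (S.submatrix (Equiv.swap 0 1) (Equiv.swap 0 1)) := by
  simp only [iota_eq_add_single, submatrix_apply, Equiv.swap_apply_left, Equiv.swap_apply_right]
  abel

theorem trace_iota_mul (Q : Matrix (Fin n) (Fin n) ℝ) :
    (iota i j S * Q).trace = (S * Q.submatrix ![i, j] ![i, j]).trace := by
  simp [iota_eq_add_single, add_mul, trace_single_mul, trace_fin_two, Matrix.mul_apply,
    Fin.sum_univ_two, add_assoc, -submatrix_cons_row]

end Iota

section DualSDDG

variable {t : ℕ} {G : SimpleGraph (Fin t)}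

theorem iota_mem_SDDG {i j : Fin t} (hadj : G.Adj i j) {S : Matrix (Fin 2) (Fin 2) ℝ}
    (hS : S.PosSemidef) : iota i j S ∈ SDDG G := by
  wlog hij : i < j generalizing i j S
  · rw [iota_swap]
    exact this hadj.symm (hS.submatrix _) (hadj.ne.lt_or_gt.resolve_left hij)
  refine ⟨fun k l => if k = i ∧ l = j then S else 0, fun k l => ?_, ?_⟩
  · dsimp only
    split_ifs
    exacts [hS, .zero]
  · rw [Finset.sum_eq_single_of_mem i (Finset.mem_univ i) fun k _ hk => by simp [hk],
      Finset.sum_eq_single_of_mem j (Finset.mem_univ j) fun l _ hl => by simp [hl]]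
    simp [hij, hadj]

theorem mem_dualCone_SDDG_iff {Q : Matrix (Fin t) (Fin t) ℝ} :
    Q ∈ dualCone (SDDG G) ↔ Q.IsSymm ∧ ∀ i j, G.Adj i j →
      ∀ S : Matrix (Fin 2) (Fin 2) ℝ, S.PosSemidef → 0 ≤ (iota i j S * Q).trace := by
  refine and_congr_right fun _ => ⟨fun h i j hadj S hS => h _ (iota_mem_SDDG hadj hS), ?_⟩
  rintro h X ⟨S, hS, rfl⟩
  simp only [Finset.sum_mul, trace_sum]
  refine Finset.sum_nonneg fun i _ => Finset.sum_nonneg fun j _ => ?_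
  split_ifs with hij
  · exact h i j hij.2 (S i j) (hS i j)
  · simp

end DualSDDG

/-- `(SDD^G)* = {Q ∈ Sᵗ : ι_{ij}*(Q) ⪰ 0 for all {i,j} ∈ E}`. -/
theorem dual_SDDG {t : ℕ} (G : SimpleGraph (Fin t)) :
    dualCone (SDDG G) =
      {Q | Q.IsSymm ∧ ∀ i j : Fin t, G.Adj i j →
        (!![Q i i, Q i j; Q j i, Q j j]).PosSemidef} := by
  ext Q
  rw [mem_dualCone_SDDG_iff]
  refine and_congr_right fun hQ => forall₃_congr fun i j _ => ?_
  have block_eq : Q.submatrix ![i, j] ![i, j] = !![Q i i, Q i j; Q j i, Q j j] := eta_fin_two _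
  have block_isHermitian : (Q.submatrix ![i, j] ![i, j]).IsHermitian :=
    (isHermitian_iff_isSymm.mpr hQ).submatrix _
  simp only [trace_iota_mul]
  rw [← block_eq, posSemidef_iff_forall_trace_mul_nonneg block_isHermitian]

end
end

section
/- Let G be a graph on vertices {1,…,t} with edge set E. Then SDD^G_+ = Σ_{{i,j}∈E} ι_{ij}(S²₊ ∩ N²); that is, a matrix lies in SDD^G ∩ N^t if and only if it is a sum over edges {i,j} ∈ E of embeddings of 2×2 positive semidefinite entrywise nonnegative matrices. -/
/-!
For `i < j`, only the summand of the edge `{i,j}` contributes to the entry `(i, j)` of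
`Σ_{{i,j}∈E} ι_{ij}(S_{ij})`, so nonnegativity of the sum forces the off-diagonal entry of every
`S_{ij}` to be nonnegative; its diagonal entries are nonnegative because it is positive
semidefinite. Hence any decomposition of a matrix in `SDD^G₊` already lies in `S²₊ ∩ N²` on the
edges.
-/

open Matrix Set

noncomputable section

lemma mem_nonnegMat_of_posSemidef {n : ℕ} {S : Matrix (Fin n) (Fin n) ℝ} (hS : S.PosSemidef)
    (hoff : ∀ a b, a < b → 0 ≤ S a b) : S ∈ NonnegMat n := by
  have hsymm : S.IsSymm := isHermitian_iff_isSymm.1 hS.isHermitian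
  refine ⟨hsymm, fun a b => ?_⟩
  rcases lt_trichotomy a b with hab | rfl | hba
  · exact hoff a b hab
  · exact hS.diag_nonneg
  · exact hsymm.apply b a ▸ hoff b a hba

/-- `Nⁿ` as an additive submonoid, so that `sum_mem` applies to sums of its elements. -/
def nonnegMatAddSubmonoid (n : ℕ) : AddSubmonoid (Matrix (Fin n) (Fin n) ℝ) where
  carrier := NonnegMat n
  zero_mem' := ⟨isSymm_zero, fun _ _ => le_rfl⟩
  add_mem' hA hB := ⟨hA.1.add hB.1, fun i j => add_nonneg (hA.2 i j) (hB.2 i j)⟩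

lemma iota_isSymm {n : ℕ} (i j : Fin n) {S : Matrix (Fin 2) (Fin 2) ℝ} (hS : S.IsSymm) :
    (iota i j S).IsSymm := by
  ext p q
  simp only [iota, transpose_apply, of_apply, hS.apply 0 1, and_comm (a := q = _)]
  ring

lemma iota_mem_nonnegMat {n : ℕ} (i j : Fin n) {S : Matrix (Fin 2) (Fin 2) ℝ}
    (hS : S ∈ NonnegMat 2) : iota i j S ∈ NonnegMat n := by
  refine ⟨iota_isSymm i j hS.1, fun p q => ?_⟩
  simp only [iota, of_apply]
  apply_rules [add_nonneg, ite_nonneg, hS.2, le_rfl]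

lemma iota_apply_of_lt {n : ℕ} {i j p q : Fin n} (hij : i < j) (hpq : p < q)
    (S : Matrix (Fin 2) (Fin 2) ℝ) :
    iota i j S p q = if p = i ∧ q = j then S 0 1 else 0 := by
  have hii : ¬(p = i ∧ q = i) := by rintro ⟨rfl, rfl⟩; exact hpq.false
  have hji : ¬(p = j ∧ q = i) := by rintro ⟨rfl, rfl⟩; exact hij.asymm hpq
  have hjj : ¬(p = j ∧ q = j) := by rintro ⟨rfl, rfl⟩; exact hpq.false
  simp only [iota, of_apply, hii, hji, hjj, if_false, zero_add, add_zero]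

section EdgeSum

variable {t : ℕ} (G : SimpleGraph (Fin t))

open scoped Classical in
/-- The sum `Σ_{{i,j}∈E} ι_{ij}(S i j)`, where the edge `{i,j}` is listed once, with `i < j`; the
other values of `S` are ignored. -/
def edgeSum (S : Fin t → Fin t → Matrix (Fin 2) (Fin 2) ℝ) : Matrix (Fin t) (Fin t) ℝ :=
  ∑ i : Fin t, ∑ j : Fin t, if i < j ∧ G.Adj i j then iota i j (S i j) else 0

variable {G}

lemma edgeSum_congr {S T : Fin t → Fin t → Matrix (Fin 2) (Fin 2) ℝ}
    (h : ∀ i j, i < j → G.Adj i j → S i j = T i j) : edgeSum G S = edgeSum G T := by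
  refine Finset.sum_congr rfl fun i _ => Finset.sum_congr rfl fun j _ => ?_
  split_ifs with hij
  · rw [h i j hij.1 hij.2]
  · rfl

lemma edgeSum_mem_nonnegMat {S : Fin t → Fin t → Matrix (Fin 2) (Fin 2) ℝ}
    (hS : ∀ i j, i < j → G.Adj i j → S i j ∈ NonnegMat 2) : edgeSum G S ∈ NonnegMat t := by
  change edgeSum G S ∈ nonnegMatAddSubmonoid t
  refine sum_mem fun i _ => sum_mem fun j _ => ?_
  split_ifs with hij
  · exact iota_mem_nonnegMat i j (hS i j hij.1 hij.2)
  · exact zero_mem _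

lemma edgeSum_apply_of_adj (S : Fin t → Fin t → Matrix (Fin 2) (Fin 2) ℝ) {p q : Fin t}
    (hpq : p < q) (hadj : G.Adj p q) : edgeSum G S p q = S p q 0 1 := by
  classical
  have entry (i j : Fin t) : (if i < j ∧ G.Adj i j then iota i j (S i j) else 0) p q =
      if p = i then if q = j then S p q 0 1 else 0 else 0 := by
    by_cases hij : i < j ∧ G.Adj i j
    · rw [if_pos hij, iota_apply_of_lt hij.1 hpq]
      grind
    · have hne : ¬(p = i ∧ q = j) := by rintro ⟨rfl, rfl⟩; exact hij ⟨hpq, hadj⟩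
      rw [if_neg hij, Matrix.zero_apply, ← ite_and, if_neg hne]
  simp only [edgeSum, Matrix.sum_apply, entry, Finset.sum_ite_irrel, Finset.sum_ite_eq,
    Finset.sum_const_zero, Finset.mem_univ, if_true]

lemma mem_nonnegMat_of_edgeSum_apply_nonneg {S : Fin t → Fin t → Matrix (Fin 2) (Fin 2) ℝ}
    {i j : Fin t} (hij : i < j) (hadj : G.Adj i j) (hpsd : (S i j).PosSemidef)
    (hsum : 0 ≤ edgeSum G S i j) : S i j ∈ NonnegMat 2 := by
  rw [edgeSum_apply_of_adj S hij hadj] at hsum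
  refine mem_nonnegMat_of_posSemidef hpsd fun a b hab => ?_
  obtain ⟨rfl, rfl⟩ : a = 0 ∧ b = 1 := by omega
  exact hsum

end EdgeSum

open scoped Classical in
/-- `SDD^G₊ = Σ_{{i,j}∈E} ι_{ij}(S²₊ ∩ N²)`. -/
theorem SDDGplus_decomp {t : ℕ} (G : SimpleGraph (Fin t)) :
    SDDGplus G =
      {X | ∃ S : Fin t → Fin t → Matrix (Fin 2) (Fin 2) ℝ,
        (∀ i j : Fin t, (S i j).PosSemidef ∧ ∀ a b, 0 ≤ S i j a b) ∧
        X = ∑ i : Fin t, ∑ j : Fin t, if i < j ∧ G.Adj i j then iota i j (S i j) else 0} := by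
  ext X
  constructor
  · rintro ⟨⟨S, hpsd, rfl⟩, hsum⟩
    let T : Fin t → Fin t → Matrix (Fin 2) (Fin 2) ℝ :=
      fun i j => if i < j ∧ G.Adj i j then S i j else 0
    refine ⟨T, fun i j => ?_, edgeSum_congr fun i j hij hadj => (if_pos ⟨hij, hadj⟩).symm⟩
    by_cases hij : i < j ∧ G.Adj i j
    · rw [show T i j = S i j from if_pos hij]
      have hmem : S i j ∈ NonnegMat 2 :=
        mem_nonnegMat_of_edgeSum_apply_nonneg hij.1 hij.2 (hpsd i j) (hsum.2 i j)
      exact ⟨hpsd i j, hmem.2⟩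
    · rw [show T i j = 0 from if_neg hij]
      exact ⟨PosSemidef.zero, fun _ _ => le_rfl⟩
  · rintro ⟨S, hS, rfl⟩
    exact ⟨⟨S, fun i j => (hS i j).1, rfl⟩, edgeSum_mem_nonnegMat fun i j _ _ =>
      ⟨isHermitian_iff_isSymm.1 (hS i j).1.isHermitian, (hS i j).2⟩⟩

end
end
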